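/- arXiv:1111.1011 — 8 statements merged into one kernel-verified Lean document; each statement's English description precedes it below -/
import Mathlib

section
/- Let M=(Q,Γ,Δ,q₀,γ₀) be a DCFS and k∈ℕ, and let M' be the switch-number-recording DCFS constructed from M and k. Then for every state q∈Q: q is k-bounded reachable by M if and only if q is reachable by M'. -/
namespace DCPSFormal

/-- Rules of a dynamic network of concurrent pushdown systems (DCPS):
creation rules `⟨q,γ⟩ → ⟨q',u⟩ ▷ α` (with `α = none` meaning `ε`),
interruption rules `⟨q,γ⟩ ↦ ⟨q',u⟩`, and resumption rules `q ↦ q' ◁ γ`. -/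
inductive Rule (Q Γ : Type*) where
  | cr : Q → Γ → Q → List Γ → Option Γ → Rule Q Γ
  | intr : Q → Γ → Q → List Γ → Rule Q Γ
  | res : Q → Γ → Q → Rule Q Γ

/-- A DCPS: a set of rules, an initial state and an initial stack symbol. -/
structure DCPS (Q Γ : Type*) where
  rules : Set (Rule Q Γ)
  q0 : Q
  γ0 : Γ

/-- Well-formedness of a DCPS: every pushed word has length at most 2. -/
def IsDCPSWf {Q Γ : Type*} (M : DCPS Q Γ) : Prop :=
  ∀ r ∈ M.rules,
    match r with
    | .cr _ _ _ u _ => u.length ≤ 2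
    | .intr _ _ _ u => u.length ≤ 2
    | .res _ _ _ => True

/-- A DCFS is a DCPS in which every pushed word has length at most 1. -/
def IsDCFS {Q Γ : Type*} (M : DCPS Q Γ) : Prop :=
  ∀ r ∈ M.rules,
    match r with
    | .cr _ _ _ u _ => u.length ≤ 1
    | .intr _ _ _ u => u.length ≤ 1
    | .res _ _ _ => True

/-- A configuration of a DCPS: global state, optional active local configuration
(stack content and switch number), and a finitely supported multiset of pending
local configurations. -/
structure Config (Q Γ : Type*) where
  state : Q
  active : Option (List Γ × ℕ)
  idle : (List Γ × ℕ) →₀ ℕ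

/-- The thread possibly spawned by a creation rule with creation component `α`
when the active thread has switch number `i`. -/
noncomputable def spawnOf {Γ : Type*} (α : Option Γ) (i : ℕ) : (List Γ × ℕ) →₀ ℕ :=
  match α with
  | none => 0
  | some a => Finsupp.single ([a], i + 1) 1

/-- The transition system `T(M)` of a DCPS, with steps labelled by rules. -/
inductive Step {Q Γ : Type*} (M : DCPS Q Γ) : Rule Q Γ → Config Q Γ → Config Q Γ → Prop
  | cr {q γ q' u α w i V} :
      Rule.cr q γ q' u α ∈ M.rules →
      Step M (.cr q γ q' u α) ⟨q, some (γ :: w, i), V⟩ ⟨q', some (u ++ w, i), V + spawnOf α i⟩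
  | intr {q γ q' u w i V} :
      Rule.intr q γ q' u ∈ M.rules →
      Step M (.intr q γ q' u) ⟨q, some (γ :: w, i), V⟩
        ⟨q', none, V + Finsupp.single (u ++ w, i + 1) 1⟩
  | res {q γ q' w i V} :
      Rule.res q γ q' ∈ M.rules →
      Step M (.res q γ q') ⟨q, none, V + Finsupp.single (γ :: w, i) 1⟩ ⟨q', some (γ :: w, i), V⟩

/-- `c ∈ Conf_I(M)`: the active thread exists and its switch number lies in `I`. -/
def ActiveIn {Q Γ : Type*} (I : Set ℕ) (c : Config Q Γ) : Prop :=
  ∃ w i, c.active = some (w, i) ∧ i ∈ I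

/-- The `I`-bounded transition system `T_I(M)`. -/
def StepIn {Q Γ : Type*} (M : DCPS Q Γ) (I : Set ℕ) (r : Rule Q Γ) (c c' : Config Q Γ) : Prop :=
  Step M r c c' ∧ (ActiveIn I c ∨ ActiveIn I c')

/-- Reachability in `T(M)`. -/
def Reaches {Q Γ : Type*} (M : DCPS Q Γ) : Config Q Γ → Config Q Γ → Prop :=
  Relation.ReflTransGen (fun a b => ∃ r, Step M r a b)

/-- Reachability in `T_I(M)`. -/
def ReachesIn {Q Γ : Type*} (M : DCPS Q Γ) (I : Set ℕ) : Config Q Γ → Config Q Γ → Prop :=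
  Relation.ReflTransGen (fun a b => ∃ r, StepIn M I r a b)

/-- The initial configuration of a DCPS. -/
noncomputable def initConfig {Q Γ : Type*} (M : DCPS Q Γ) : Config Q Γ :=
  ⟨M.q0, none, Finsupp.single ([M.γ0], 0) 1⟩

/-- `q` is reachable by `M`. -/
def StateReachable {Q Γ : Type*} (M : DCPS Q Γ) (q : Q) : Prop :=
  ∃ c, Reaches M (initConfig M) c ∧ c.active = none ∧ c.state = q

/-- `q` is `k`-bounded reachable by `M`. -/
def KBoundedReachable {Q Γ : Type*} (M : DCPS Q Γ) (k : ℕ) (q : Q) : Prop :=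
  ∃ c, ReachesIn M {i | i ≤ k} (initConfig M) c ∧ c.active = none ∧ c.state = q

/-- `q` is `k`-stratified reachable by `M`. -/
def KStratifiedReachable {Q Γ : Type*} (M : DCPS Q Γ) (k : ℕ) (q : Q) : Prop :=
  ∃ c : ℕ → Config Q Γ, c 0 = initConfig M ∧
    (∀ l ≤ k, ReachesIn M {l} (c l) (c (l + 1))) ∧
    (c (k + 1)).active = none ∧ (c (k + 1)).state = q

/-- A labelled run in a labelled transition system. -/
inductive LRun {C L : Type*} (step : L → C → C → Prop) : List L → C → C → Prop
  | nil (c) : LRun step [] c c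
  | cons {l τ c c' c''} : step l c c' → LRun step τ c' c'' → LRun step (l :: τ) c c''

/-- A pushdown automaton with states `S`, input alphabet `A` and stack alphabet `Γ`. -/
structure PDA (S A Γ : Type*) where
  trans : Set ((S × Γ) × Option A × (S × List Γ))
  p0 : S
  γ0 : Γ
  final : Set S

/-- A single (possibly `ε`-labelled) step of a PDA. -/
inductive PDAStep {S A Γ : Type*} (P : PDA S A Γ) :
    Option A → (S × List Γ) → (S × List Γ) → Prop
  | mk {p γ a p' u w} : ((p, γ), a, (p', u)) ∈ P.trans →
      PDAStep P a (p, γ :: w) (p', u ++ w)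

/-- A run of a PDA labelled by the word obtained by concatenating all non-`ε` labels. -/
inductive PDATrace {S A Γ : Type*} (P : PDA S A Γ) :
    List A → (S × List Γ) → (S × List Γ) → Prop
  | nil (c) : PDATrace P [] c c
  | eps {v c c' c''} : PDAStep P none c c' → PDATrace P v c' c'' → PDATrace P v c c''
  | cons {a v c c' c''} : PDAStep P (some a) c c' → PDATrace P v c' c'' →
      PDATrace P (a :: v) c c''

/-- The language of a PDA (acceptance by final state). -/
def PDALang {S A Γ : Type*} (P : PDA S A Γ) : Set (List A) :=
  { v | ∃ p w, p ∈ P.final ∧ PDATrace P v (P.p0, [P.γ0]) (p, w) }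

/-- A finite state automaton. -/
structure FSA (S A : Type*) where
  trans : Set (S × Option A × S)
  init : Set S
  final : Set S

/-- A run of an FSA labelled by a word (`ε`-labels contribute nothing). -/
inductive FSARun {S A : Type*} (Au : FSA S A) : List A → S → S → Prop
  | nil (s) : FSARun Au [] s s
  | eps {v s s' s''} : (s, none, s') ∈ Au.trans → FSARun Au v s' s'' → FSARun Au v s s''
  | cons {a v s s' s''} : (s, some a, s') ∈ Au.trans → FSARun Au v s' s'' →
      FSARun Au (a :: v) s s''

/-- The language of an FSA. -/
def FSALang {S A : Type*} (Au : FSA S A) : Set (List A) :=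
  { v | ∃ s ∈ Au.init, ∃ s' ∈ Au.final, FSARun Au v s s' }

/-- A vector addition system with states of dimension `n`. -/
structure VASS (n : ℕ) (S A : Type*) where
  δ : S → A → S × (Fin n → ℤ)
  s0 : S
  v0 : Fin n → ℕ

/-- A step of a VASS: `(q₁,u₁) →ᵃ (q₂,u₂)` iff `δ(q₁,a) = (q₂, u₂ - u₁)`. -/
def VStep {n : ℕ} {S A : Type*} (V : VASS n S A) (a : A) :
    (S × (Fin n → ℕ)) → (S × (Fin n → ℕ)) → Prop :=
  fun c c' => (V.δ c.1 a).1 = c'.1 ∧ ∀ i, (c'.2 i : ℤ) = (c.2 i : ℤ) + (V.δ c.1 a).2 i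

/-- Reachability in the transition system of a VASS. -/
def VReaches {n : ℕ} {S A : Type*} (V : VASS n S A) :
    (S × (Fin n → ℕ)) → (S × (Fin n → ℕ)) → Prop :=
  Relation.ReflTransGen (fun c c' => ∃ a, VStep V a c c')

/-- A state `s` is reachable by the VASS `V`. -/
def VStateReachable {n : ℕ} {S A : Type*} (V : VASS n S A) (s : S) : Prop :=
  ∃ u, VReaches V (V.s0, V.v0) (s, u)

/-- The `i`-th unit vector. -/
def unitVec {m : ℕ} (i : Fin m) : Fin m → ℤ := fun j => if j = i then 1 else 0

/-- The `i`-lift of a rule of a DCFS, used to build the switch-number-recording DCFS.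
A stack symbol of the recording system is a pair `(w, i)` with `w ∈ Γ ∪ {ε}`
(modelled as `Option Γ`) and `i` a recorded switch number in `{0,…,k+1}`; the pushed
word `u` of a DCFS rule (of length at most 1) is represented by `u.head? : Option Γ`. -/
def liftRule {Q Γ : Type*} (i : ℕ) : Rule Q Γ → Rule Q (Option Γ × ℕ)
  | .cr q γ q' u α => .cr q (some γ, i) q' [(u.head?, i)] (α.map fun a => (some a, i + 1))
  | .intr q γ q' u => .intr q (some γ, i) q' [(u.head?, i + 1)]
  | .res q γ q' => .res q (some γ, i) q'

/-- The switch-number-recording DCFS `M'` constructed from a DCFS `M` and `k`. -/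
def recordDCFS {Q Γ : Type*} (M : DCPS Q Γ) (k : ℕ) : DCPS Q (Option Γ × ℕ) where
  rules := { r' | ∃ i ≤ k, ∃ r ∈ M.rules, r' = liftRule i r }
  q0 := M.q0
  γ0 := (some M.γ0, 0)

/-- Encoding of a local configuration. -/
def encL {Γ : Type*} (x : List Γ × ℕ) : List (Option Γ × ℕ) × ℕ := ([(x.1.head?, x.2)], x.2)

/-- Encoding of a configuration. -/
noncomputable def encC {Q Γ : Type*} (c : Config Q Γ) : Config Q (Option Γ × ℕ) :=
  ⟨c.state, c.active.map encL, c.idle.mapDomain encL⟩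

/-- All stacks have height at most one. -/
def Short {Q Γ : Type*} (c : Config Q Γ) : Prop :=
  (∀ x, c.active = some x → x.1.length ≤ 1) ∧ ∀ x, c.idle x ≠ 0 → x.1.length ≤ 1

theorem enc_spawn {Γ : Type*} (α : Option Γ) (i : ℕ) :
    (spawnOf α i).mapDomain encL = spawnOf (α.map fun a => (some a, i + 1)) i := by
  cases α <;> simp [spawnOf, encL, Finsupp.mapDomain_single]

theorem short_add {Γ : Type*} {V : (List Γ × ℕ) →₀ ℕ} {y : List Γ × ℕ}
    (h : ∀ x, V x ≠ 0 → x.1.length ≤ 1) (hy : y.1.length ≤ 1) :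
    ∀ x : List Γ × ℕ, (V + Finsupp.single y 1 : (List Γ × ℕ) →₀ ℕ) x ≠ 0 → x.1.length ≤ 1 := by
  intro x hx
  by_cases hxy : y = x
  · subst hxy; exact hy
  · apply h
    simpa [Finsupp.single_apply, hxy] using hx

theorem short_spawn {Γ : Type*} {V : (List Γ × ℕ) →₀ ℕ} {α : Option Γ} {i : ℕ}
    (h : ∀ x, V x ≠ 0 → x.1.length ≤ 1) :
    ∀ x : List Γ × ℕ, (V + spawnOf α i : (List Γ × ℕ) →₀ ℕ) x ≠ 0 → x.1.length ≤ 1 := by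
  cases α with
  | none => simpa [spawnOf] using h
  | some a => exact short_add h (by simp)

theorem short_step {Q Γ : Type*} {M : DCPS Q Γ} (hd : IsDCFS M) {r} {c c' : Config Q Γ}
    (hs : Step M r c c') (h : Short c) : Short c' := by
  cases hs with
  | @cr q γ q' u α w i V hr =>
    have hu : u.length ≤ 1 := hd _ hr
    have hw : w = [] := by simpa using h.1 _ rfl
    subst hw
    refine ⟨?_, short_spawn h.2⟩
    rintro x hx
    cases hx
    simpa using hu
  | @intr q γ q' u w i V hr =>
    have hu : u.length ≤ 1 := hd _ hr
    have hw : w = [] := by simpa using h.1 _ rfl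
    subst hw
    refine ⟨?_, short_add h.2 (by simpa using hu)⟩
    rintro x hx
    cases hx
  | @res q γ q' w i V hr =>
    refine ⟨?_, ?_⟩
    · rintro x hx
      cases hx
      exact h.2 _ (by simp)
    · intro x hx
      apply h.2
      have hx' : V x ≠ 0 := hx
      simp only [Finsupp.add_apply]
      omega

theorem step_fwd {Q Γ : Type*} {M : DCPS Q Γ} {k : ℕ} {r} {c c' : Config Q Γ}
    (hs : StepIn M {i | i ≤ k} r c c') (h : Short c) :
    ∃ r', Step (recordDCFS M k) r' (encC c) (encC c') := by
  obtain ⟨hs, ha⟩ := hs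
  cases hs with
  | @cr q γ q' u α w i V hr =>
    have hw : w = [] := by simpa using h.1 _ rfl
    subst hw
    have hi : i ≤ k := by simpa [ActiveIn] using ha
    refine ⟨liftRule i (.cr q γ q' u α), ?_⟩
    have := Step.cr (M := recordDCFS M k) (q := q) (γ := (some γ, i)) (q' := q')
      (u := [(u.head?, i)]) (α := α.map fun a => (some a, i + 1)) (w := []) (i := i)
      (V := V.mapDomain encL) ⟨i, hi, _, hr, rfl⟩
    simpa [encC, encL, Finsupp.mapDomain_add, enc_spawn, liftRule] using this
  | @intr q γ q' u w i V hr =>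
    have hw : w = [] := by simpa using h.1 _ rfl
    subst hw
    have hi : i ≤ k := by simpa [ActiveIn] using ha
    refine ⟨liftRule i (.intr q γ q' u), ?_⟩
    have := Step.intr (M := recordDCFS M k) (q := q) (γ := (some γ, i)) (q' := q')
      (u := [(u.head?, i + 1)]) (w := []) (i := i)
      (V := V.mapDomain encL) ⟨i, hi, _, hr, rfl⟩
    simpa [encC, encL, Finsupp.mapDomain_add, Finsupp.mapDomain_single, liftRule] using this
  | @res q γ q' w i V hr =>
    have hi : i ≤ k := by simpa [ActiveIn] using ha
    refine ⟨liftRule i (.res q γ q'), ?_⟩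
    have := Step.res (M := recordDCFS M k) (q := q) (γ := (some γ, i)) (q' := q')
      (w := []) (i := i) (V := V.mapDomain encL) ⟨i, hi, _, hr, rfl⟩
    simpa [encC, encL, Finsupp.mapDomain_add, Finsupp.mapDomain_single, liftRule] using this

theorem enc_active {Γ : Type*} {a : Option (List Γ × ℕ)} {γ : Γ} {i j : ℕ}
    {w : List (Option Γ × ℕ)} (hl : ∀ x, a = some x → x.1.length ≤ 1)
    (h : some ((some γ, i) :: w, j) = a.map encL) :
    a = some ([γ], i) ∧ j = i ∧ w = [] := by
  rcases a with _ | ⟨_ | ⟨b, l⟩, n⟩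
  · simp at h
  · simp [encL] at h
  · have := hl _ rfl
    simp at this
    simp [encL] at h
    grind

theorem step_bwd {Q Γ : Type*} {M : DCPS Q Γ} {k : ℕ} {r'} {c : Config Q Γ} {e d}
    (hs : Step (recordDCFS M k) r' e d) (he : e = encC c) (h : Short c) :
    ∃ c', d = encC c' ∧ ∃ r, StepIn M {i | i ≤ k} r c c' := by
  obtain ⟨s, a, V⟩ := c
  cases hs with
  | @cr q γ q' u α w i W hr =>
    obtain ⟨n, hn, r, hr, e⟩ := hr
    cases r <;> simp only [liftRule, Rule.cr.injEq, reduceCtorEq] at e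
    obtain ⟨rfl, rfl, rfl, rfl, rfl⟩ := e
    simp only [encC, Config.mk.injEq] at he
    obtain ⟨rfl, ha, rfl⟩ := he
    obtain ⟨rfl, rfl, rfl⟩ := enc_active h.1 ha
    refine ⟨_, ?_, _, Step.cr hr, Or.inl ⟨_, _, rfl, hn⟩⟩
    simp [encC, encL, Finsupp.mapDomain_add, enc_spawn]
  | @intr q γ q' u w i W hr =>
    obtain ⟨n, hn, r, hr, e⟩ := hr
    cases r <;> simp only [liftRule, Rule.intr.injEq, reduceCtorEq] at e
    obtain ⟨rfl, rfl, rfl, rfl⟩ := e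
    simp only [encC, Config.mk.injEq] at he
    obtain ⟨rfl, ha, rfl⟩ := he
    obtain ⟨rfl, rfl, rfl⟩ := enc_active h.1 ha
    refine ⟨_, ?_, _, Step.intr hr, Or.inl ⟨_, _, rfl, hn⟩⟩
    simp [encC, encL, Finsupp.mapDomain_add, Finsupp.mapDomain_single]
  | @res q γ q' w i W hr =>
    obtain ⟨n, hn, r, hr, e⟩ := hr
    cases r <;> simp only [liftRule, Rule.res.injEq, reduceCtorEq] at e
    rename_i g _
    obtain ⟨rfl, rfl, rfl⟩ := e
    simp only [encC, Config.mk.injEq] at he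
    obtain ⟨rfl, ha, hV⟩ := he
    have ha' : a = none := by simpa using ha.symm
    subst ha'
    classical
    have hm : ((some g, n) :: w, i) ∈ (V.mapDomain encL).support := by
      rw [← hV]; simp
    obtain ⟨x, hx, hxe⟩ := Finset.mem_image.1 (Finsupp.mapDomain_support hm)
    have hx0 : V x ≠ 0 := by simpa using hx
    have := enc_active (a := some x) (γ := g) (i := n) (j := i) (w := w)
      (by rintro y hy; cases hy; exact h.2 _ hx0) (by simp [hxe])
    obtain ⟨hxx, rfl, rfl⟩ := this
    simp only [Option.some.injEq] at hxx
    subst hxx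
    obtain ⟨V0, rfl⟩ : ∃ V0, V = V0 + Finsupp.single ([g], i) 1 :=
      ⟨V - Finsupp.single ([g], i) 1, (tsub_add_cancel_of_le (by
        rw [Finsupp.single_le_iff]; omega)).symm⟩
    refine ⟨_, ?_, _, Step.res hr, Or.inr ⟨_, _, rfl, hn⟩⟩
    rw [Finsupp.mapDomain_add, Finsupp.mapDomain_single] at hV
    have hW := add_right_cancel (b := Finsupp.single ([(some g, i)], i) 1) hV
    simp [encC, encL, hW]

theorem short_init {Q Γ : Type*} (M : DCPS Q Γ) : Short (initConfig M) := by
  refine ⟨by simp [initConfig], ?_⟩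
  have := short_add (V := 0) (y := ([M.γ0], 0)) (by simp) (by simp)
  simpa [initConfig] using this

theorem enc_init {Q Γ : Type*} (M : DCPS Q Γ) (k : ℕ) :
    encC (initConfig M) = initConfig (recordDCFS M k) := by
  simp [encC, initConfig, recordDCFS, Finsupp.mapDomain_single, encL]

/-- For a DCFS `M` and `k ∈ ℕ`, a state `q` is `k`-bounded
reachable by `M` iff `q` is reachable by the switch-number-recording DCFS `M'`. -/
theorem bsrK_iff_sr_record
    (Q Γ : Type) [Fintype Q] [Fintype Γ] (M : DCPS Q Γ)
    (hfin : M.rules.Finite) (hdcfs : IsDCFS M) (k : ℕ) (q : Q) :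
    KBoundedReachable M k q ↔ StateReachable (recordDCFS M k) q := by
  constructor
  · rintro ⟨c, hc, ha, hq⟩
    have key : Short c ∧ Reaches (recordDCFS M k) (initConfig (recordDCFS M k)) (encC c) := by
      clear ha hq
      induction hc with
      | refl => exact ⟨short_init M, by rw [enc_init M k]; exact Relation.ReflTransGen.refl⟩
      | tail _ hs ih =>
        obtain ⟨r, hs⟩ := hs
        exact ⟨short_step hdcfs hs.1 ih.1, ih.2.tail (step_fwd hs ih.1)⟩
    exact ⟨_, key.2, by simp [encC, ha], hq⟩
  · rintro ⟨d, hd, ha, hq⟩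
    have key : ∃ c, d = encC c ∧ Short c ∧ ReachesIn M {i | i ≤ k} (initConfig M) c := by
      clear ha hq
      induction hd with
      | refl => exact ⟨_, (enc_init M k).symm, short_init M, Relation.ReflTransGen.refl⟩
      | tail _ hs ih =>
        obtain ⟨c, he, hsh, hr⟩ := ih
        obtain ⟨r, hs⟩ := hs
        obtain ⟨c', he', r', hs'⟩ := step_bwd hs he hsh
        exact ⟨c', he', short_step hdcfs hs'.1 hsh, hr.tail ⟨r', hs'⟩⟩
    obtain ⟨c, rfl, _, hr⟩ := key
    exact ⟨c, hr, by simpa [encC] using ha, hq⟩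

end DCPSFormal
end

section
/- Let M=(Q,Γ,Δ,q₀,γ₀) be a DCFS, k∈ℕ, and M' the switch-number-recording DCFS constructed from M and k. For every configuration c of M': if the initial configuration of M' reaches c in T(M'), then Active(c) belongs to {⊥}∪{((w,i),i) : w∈Γ∪{ε}, i∈{0,…,k}} (i.e., the active thread's stack is the single symbol (w,i) and its switch number equals i); Idle(c)((ε,l))=0 for every l∈ℕ (ε the empty stack word); and Idle(c)(((w',i'),j'))=0 for all w'∈Γ∪{ε} and all i',j'∈ℕ with i'≠j'. -/
namespace DCPSFormal

/-- The strengthened invariant. -/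
def RecInv {Q Γ : Type*} (k : ℕ) (c : Config Q (Option Γ × ℕ)) : Prop :=
  (c.active = none ∨ ∃ (w : Option Γ) (i : ℕ), i ≤ k ∧ c.active = some ([(w, i)], i)) ∧
  ∀ p, c.idle p ≠ 0 → ∃ (w : Option Γ) (i : ℕ), p = ([(w, i)], i)

theorem single_good {Γ : Type*} (w : Option Γ) (i : ℕ) (p : List (Option Γ × ℕ) × ℕ)
    (h : (Finsupp.single (([(w, i)], i) : List (Option Γ × ℕ) × ℕ) 1) p ≠ (0 : ℕ)) :
    ∃ (w : Option Γ) (i : ℕ), p = ([(w, i)], i) := by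
  classical
  rw [Finsupp.single_apply] at h
  split_ifs at h with h1
  · exact ⟨w, i, h1.symm⟩
  · exact absurd rfl h

theorem recInv_step {Q Γ : Type*} (M : DCPS Q Γ) (k : ℕ) (r : Rule Q (Option Γ × ℕ))
    (a b : Config Q (Option Γ × ℕ)) (h : Step (recordDCFS M k) r a b) (ha : RecInv k a) :
    RecInv k b := by
  obtain ⟨h1, h2⟩ := ha
  cases h with
  | @cr q γ q' u α w i V hr =>
    obtain ⟨j, hj, r, hr, e⟩ := hr
    cases r with
    | intr => simp [liftRule] at e
    | res => simp [liftRule] at e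
    | cr p g p' v β =>
      simp only [liftRule, Rule.cr.injEq] at e
      obtain ⟨-, rfl, -, rfl, rfl⟩ := e
      simp only [reduceCtorEq, Option.some.injEq, Prod.mk.injEq, List.cons.injEq, false_or] at h1
      obtain ⟨w', i', hi, ⟨⟨-, rfl⟩, rfl⟩, rfl⟩ := h1
      refine ⟨Or.inr ⟨_, _, hi, rfl⟩, fun p hp => ?_⟩
      by_cases hV : V p = 0
      · cases β with
        | none => simp [spawnOf, hV] at hp
        | some b =>
          simp only [spawnOf, Option.map_some, Finsupp.add_apply, hV, zero_add] at hp
          exact single_good _ _ p hp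
      · exact h2 p hV
  | @intr q γ q' u w i V hr =>
    obtain ⟨j, hj, r, hr, e⟩ := hr
    cases r with
    | cr => simp [liftRule] at e
    | res => simp [liftRule] at e
    | intr p g p' v =>
      simp only [liftRule, Rule.intr.injEq] at e
      obtain ⟨-, rfl, -, rfl⟩ := e
      simp only [reduceCtorEq, Option.some.injEq, Prod.mk.injEq, List.cons.injEq, false_or] at h1
      obtain ⟨w', i', hi, ⟨⟨-, rfl⟩, rfl⟩, rfl⟩ := h1
      refine ⟨Or.inl rfl, fun p hp => ?_⟩
      by_cases hV : V p = 0
      · simp only [Finsupp.add_apply, hV, zero_add] at hp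
        exact single_good _ _ p hp
      · exact h2 p hV
  | @res q γ q' w i V hr =>
    obtain ⟨j, hj, r, hr, e⟩ := hr
    cases r with
    | cr => simp [liftRule] at e
    | intr => simp [liftRule] at e
    | res p g p' =>
      simp only [liftRule, Rule.res.injEq] at e
      obtain ⟨-, rfl, -⟩ := e
      obtain ⟨w', i', e'⟩ := h2 ((some g, j) :: w, i) (by simp)
      simp only [Prod.mk.injEq, List.cons.injEq] at e'
      obtain ⟨⟨⟨rfl, rfl⟩, rfl⟩, rfl⟩ := e'
      refine ⟨Or.inr ⟨_, _, hj, rfl⟩, fun p hp => h2 p ?_⟩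
      simp only [Finsupp.add_apply]
      change V p ≠ 0 at hp
      omega

/-- Invariant of reachable configurations of the
switch-number-recording DCFS `M'`: the active thread (if any) has stack a single
symbol `(w,i)` with switch number exactly `i ≤ k`; no pending thread has empty
stack; and every pending thread with stack symbol `(w',i')` has switch number `i'`. -/
theorem record_reachable_invariant
    (Q Γ : Type) [Fintype Q] [Fintype Γ] (M : DCPS Q Γ)
    (hfin : M.rules.Finite) (hdcfs : IsDCFS M) (k : ℕ)
    (c : Config Q (Option Γ × ℕ))
    (hreach : Reaches (recordDCFS M k) (initConfig (recordDCFS M k)) c) :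
    (c.active = none ∨ ∃ (w : Option Γ) (i : ℕ), i ≤ k ∧ c.active = some ([(w, i)], i)) ∧
    (∀ l : ℕ, c.idle ([], l) = 0) ∧
    (∀ (w' : Option Γ) (i' j' : ℕ), i' ≠ j' → c.idle ([(w', i')], j') = 0) := by
  have key : RecInv k c := by
    induction hreach with
    | refl => exact ⟨Or.inl rfl, fun p hp => single_good _ _ p hp⟩
    | tail _ hs ih =>
      obtain ⟨r, hr⟩ := hs
      exact recInv_step M k r _ _ hr ih
  refine ⟨key.1, fun l => ?_, fun w' i' j' hne => ?_⟩
  · by_contra hc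
    obtain ⟨w, i, e⟩ := key.2 _ hc
    simp at e
  · by_contra hc
    obtain ⟨w, i, e⟩ := key.2 _ hc
    simp only [Prod.mk.injEq, List.cons.injEq] at e
    exact hne (e.1.1.2.trans e.2.symm)

end DCPSFormal
end

section
/- Let M=(Q,Γ,Δ,q₀,γ₀) be a DCFS, k∈ℕ, and M' the switch-number-recording DCFS constructed from M and k. If c_init^M→*c in T_{[0,k]}(M), then there is a run c_init^{M'}→*c' in T(M') where c' is the configuration of M' determined by: State(c')=State(c); Active(c')=⊥ if Active(c)=⊥, and Active(c')=((w,i),i) if Active(c)=(w,i) with w∈Γ∪{ε} and i∈{0,…,k}; Idle(c')(((w',j'),j'))=Idle(c)((w',j')) for all w'∈Γ∪{ε} and j'∈{0,…,k+1}, and Idle(c') equals 0 on every other local configuration of M'. -/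
namespace DCPSFormal

/-- Encoding of local configurations. -/
def encLoc {Γ : Type*} (p : List Γ × ℕ) : List (Option Γ × ℕ) × ℕ := ([(p.1.head?, p.2)], p.2)

/-- Invariant on idle threads. -/
def GoodIdle {Γ : Type*} (k : ℕ) (V : (List Γ × ℕ) →₀ ℕ) : Prop :=
  ∀ p, V p ≠ 0 → p.1.length ≤ 1 ∧ p.2 ≤ k + 1

/-- Encoding of configurations. -/
noncomputable def encConf {Q Γ : Type*} (c : Config Q Γ) : Config Q (Option Γ × ℕ) :=
  ⟨c.state, c.active.map encLoc, c.idle.mapDomain encLoc⟩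

theorem GoodIdle.left {Γ : Type*} {k : ℕ} {V W : (List Γ × ℕ) →₀ ℕ} (h : GoodIdle k (V + W)) :
    GoodIdle k V := by
  intro p hp
  apply h p
  rw [Finsupp.add_apply]; omega

theorem GoodIdle.add {Γ : Type*} {k : ℕ} {V W : (List Γ × ℕ) →₀ ℕ} (h : GoodIdle k V)
    (h' : GoodIdle k W) : GoodIdle k (V + W) := by
  intro p hp
  rw [Finsupp.add_apply] at hp
  by_cases h0 : V p = 0
  · exact h' p (by omega)
  · exact h p h0

theorem goodIdle_single {Γ : Type*} {k : ℕ} {l : List Γ} {i : ℕ} (hl : l.length ≤ 1)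
    (hi : i ≤ k + 1) : GoodIdle k (Finsupp.single (l, i) 1) := by
  classical
  intro p hp
  rw [Finsupp.single_apply] at hp
  split_ifs at hp with h
  · subst h; exact ⟨hl, hi⟩
  · exact absurd rfl hp

theorem goodIdle_spawn {Γ : Type*} {k : ℕ} (α : Option Γ) {i : ℕ}
    (hi : i ≤ k) : GoodIdle k (spawnOf α i) := by
  cases α with
  | none => intro p hp; simp [spawnOf] at hp
  | some a => exact goodIdle_single (by simp) (by omega)

theorem map_spawn {Γ : Type*} (α : Option Γ) (i : ℕ) :
    (spawnOf α i).mapDomain encLoc = spawnOf (α.map fun a => (some a, i + 1)) i := by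
  cases α with
  | none => simp [spawnOf]
  | some a => simp [spawnOf, encLoc, Finsupp.mapDomain_single]

/-- Full invariant. -/
def GoodConf {Q Γ : Type*} (k : ℕ) (c : Config Q Γ) : Prop :=
  GoodIdle k c.idle ∧ ∀ w i, c.active = some (w, i) → w.length ≤ 1 ∧ i ≤ k

theorem good_step {Q Γ : Type*} {M : DCPS Q Γ} (hM : IsDCFS M) {k : ℕ} {r : Rule Q Γ}
    {c d : Config Q Γ} (hs : StepIn M {i | i ≤ k} r c d) (hc : GoodConf k c) :
    GoodConf k d ∧ ∃ r', Step (recordDCFS M k) r' (encConf c) (encConf d) := by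
  obtain ⟨hs, hI⟩ := hs
  obtain ⟨hV, hA⟩ := hc
  cases hs with
  | @cr q γ q' u α w i V hr =>
    obtain ⟨hw, hi⟩ := hA _ _ rfl
    have hw : w = [] := by simpa using hw
    subst hw
    have hu : u.length ≤ 1 := hM _ hr
    refine ⟨⟨hV.add (goodIdle_spawn α hi), ?_⟩, liftRule i (.cr q γ q' u α), ?_⟩
    · intro w j h
      simp at h
      obtain ⟨rfl, rfl⟩ := h
      exact ⟨hu, hi⟩
    · have := Step.cr (M := recordDCFS M k) (q := q) (γ := (some γ, i)) (q' := q')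
        (u := [(u.head?, i)]) (α := α.map fun a => (some a, i + 1)) (w := []) (i := i)
        (V := V.mapDomain encLoc) ⟨i, hi, _, hr, rfl⟩
      simpa [encConf, encLoc, liftRule, Finsupp.mapDomain_add, map_spawn] using this
  | @intr q γ q' u w i V hr =>
    obtain ⟨hw, hi⟩ := hA _ _ rfl
    have hw : w = [] := by simpa using hw
    subst hw
    have hu : u.length ≤ 1 := hM _ hr
    refine ⟨⟨hV.add (goodIdle_single (by simpa using hu) (by omega)), ?_⟩,
      liftRule i (.intr q γ q' u), ?_⟩
    · intro w j h
      simp at h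
    · have := Step.intr (M := recordDCFS M k) (q := q) (γ := (some γ, i)) (q' := q')
        (u := [(u.head?, i + 1)]) (w := []) (i := i)
        (V := V.mapDomain encLoc) ⟨i, hi, _, hr, rfl⟩
      simpa [encConf, encLoc, liftRule, Finsupp.mapDomain_add, Finsupp.mapDomain_single] using this
  | @res q γ q' w i V hr =>
    have hi : i ≤ k := by
      rcases hI with ⟨w', j, h, hj⟩ | ⟨w', j, h, hj⟩
      · simp at h
      · simp at h
        obtain ⟨-, rfl⟩ := h
        exact hj
    have hw : (γ :: w).length ≤ 1 := (hV (γ :: w, i) (by simp)).1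
    refine ⟨⟨GoodIdle.left hV, ?_⟩, liftRule i (.res q γ q'), ?_⟩
    · intro w' j h
      simp at h
      obtain ⟨rfl, rfl⟩ := h
      exact ⟨hw, hi⟩
    · have := Step.res (M := recordDCFS M k) (q := q) (γ := (some γ, i)) (q' := q')
        (w := []) (i := i)
        (V := V.mapDomain encLoc) ⟨i, hi, _, hr, rfl⟩
      simpa [encConf, encLoc, liftRule, Finsupp.mapDomain_add, Finsupp.mapDomain_single] using this

theorem encLoc_injOn {Γ : Type*} : Set.InjOn (encLoc (Γ := Γ)) {p | p.1.length ≤ 1} := by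
  rintro ⟨l, i⟩ h ⟨l', i'⟩ h' he
  simp only [Set.mem_setOf_eq] at h h'
  match l, l', h, h' with
  | [], [], _, _ => simp_all [encLoc]
  | [a], [], _, _ => simp_all [encLoc]
  | [], [a], _, _ => simp_all [encLoc]
  | [a], [b], _, _ => simp_all [encLoc]

/-- Every `[0,k]`-bounded run of the DCFS `M` can be simulated by a
run of the switch-number-recording DCFS `M'` reaching the corresponding configuration. -/
theorem record_simulates_bounded
    (Q Γ : Type) [Fintype Q] [Fintype Γ] (M : DCPS Q Γ)
    (hfin : M.rules.Finite) (hdcfs : IsDCFS M) (k : ℕ)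
    (c : Config Q Γ)
    (hreach : ReachesIn M {i | i ≤ k} (initConfig M) c) :
    ∃ c' : Config Q (Option Γ × ℕ),
      Reaches (recordDCFS M k) (initConfig (recordDCFS M k)) c' ∧
      c'.state = c.state ∧
      (c.active = none → c'.active = none) ∧
      (∀ (w : Option Γ) (i : ℕ), i ≤ k → c.active = some (w.toList, i) →
        c'.active = some ([(w, i)], i)) ∧
      (∀ (w' : Option Γ) (j' : ℕ), j' ≤ k + 1 →
        c'.idle ([(w', j')], j') = c.idle (w'.toList, j')) ∧
      (∀ loc : List (Option Γ × ℕ) × ℕ,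
        (¬ ∃ (w' : Option Γ) (j' : ℕ), j' ≤ k + 1 ∧ loc = ([(w', j')], j')) →
        c'.idle loc = 0) := by
  classical
  have key : GoodConf k c ∧
      Reaches (recordDCFS M k) (initConfig (recordDCFS M k)) (encConf c) := by
    induction hreach with
    | refl =>
      refine ⟨⟨goodIdle_single (by simp) (by omega), by intro w i h; simp [initConfig] at h⟩, ?_⟩
      have : encConf (initConfig M) = initConfig (recordDCFS M k) := by
        simp [encConf, initConfig, recordDCFS, Finsupp.mapDomain_single, encLoc]
      rw [this]
      exact Relation.ReflTransGen.refl
    | tail _ hs ih =>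
      obtain ⟨r, hs⟩ := hs
      obtain ⟨h1, h2⟩ := good_step hdcfs hs ih.1
      exact ⟨h1, Relation.ReflTransGen.tail ih.2 h2⟩
  obtain ⟨⟨hV, -⟩, hR⟩ := key
  refine ⟨encConf c, hR, rfl, ?_, ?_, ?_, ?_⟩
  · intro h; simp [encConf, h]
  · intro w i _ h
    cases w <;> simp [encConf, h, encLoc]
  · intro w j _
    have he : (([(w, j)], j) : List (Option Γ × ℕ) × ℕ) = encLoc (w.toList, j) := by
      cases w <;> simp [encLoc]
    rw [he]
    refine Finsupp.mapDomain_apply' {p | p.1.length ≤ 1} c.idle ?_ encLoc_injOn ?_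
    · intro p hp
      exact (hV p (by simpa using hp)).1
    · cases w <;> simp
  · intro loc hloc
    by_contra hne
    have := Finsupp.mapDomain_support (Finsupp.mem_support_iff.mpr hne)
    obtain ⟨p, hp, rfl⟩ := Finset.mem_image.mp this
    exact hloc ⟨p.1.head?, p.2, (hV p (Finsupp.mem_support_iff.mp hp)).2, rfl⟩

end DCPSFormal
end

section
/- Let M=(Q,Γ,Δ,q₀,γ₀) be a DCFS, k∈ℕ, and M' the switch-number-recording DCFS constructed from M and k. If c_init^{M'}→*c' in T(M'), then there is a run c_init^M→*c in T_{[0,k]}(M), where c is the configuration of M determined by: State(c)=State(c'); Active(c)=⊥ if Active(c')=⊥, and Active(c)=(w,i) if Active(c')=((w,i),i) with w∈Γ∪{ε} and i∈{0,…,k}; Idle(c)((w',j'))=Idle(c')(((w',j'),j')) for all w'∈Γ∪{ε} and j'∈{0,…,k+1}, and Idle(c) equals 0 on every other local configuration of M. -/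
namespace DCPSFormal

/-- Embedding of recorded symbols into local configurations of `M`. -/
def eM {Γ : Type*} (x : Option Γ × ℕ) : List Γ × ℕ := (x.1.toList, x.2)

/-- Embedding of recorded symbols into local configurations of `M'`. -/
def eR {Γ : Type*} (x : Option Γ × ℕ) : List (Option Γ × ℕ) × ℕ := ([x], x.2)

theorem eM_inj {Γ : Type*} : Function.Injective (eM (Γ := Γ)) := by
  rintro ⟨a, i⟩ ⟨b, j⟩ h
  cases a <;> cases b <;> simp_all [eM]

theorem eR_inj {Γ : Type*} : Function.Injective (eR (Γ := Γ)) := by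
  rintro a b h
  simpa [eR] using (congrArg Prod.fst h)

/-- The simulation invariant. -/
def Sim {Q Γ : Type*} (k : ℕ) (c : Config Q Γ) (c' : Config Q (Option Γ × ℕ)) : Prop :=
  c.state = c'.state ∧
  ((c'.active = none ∧ c.active = none) ∨
    ∃ x : Option Γ × ℕ, x.2 ≤ k ∧ c'.active = some (eR x) ∧ c.active = some (eM x)) ∧
  ∃ g : (Option Γ × ℕ) →₀ ℕ, (∀ x, g x ≠ 0 → x.2 ≤ k + 1) ∧
    c'.idle = g.mapDomain eR ∧ c.idle = g.mapDomain eM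

theorem toList_head {Γ : Type*} {u : List Γ} (h : u.length ≤ 1) : u.head?.toList = u := by
  match u, h with
  | [], _ => rfl
  | [a], _ => rfl

theorem bound_add {Γ : Type*} {k : ℕ} {g : (Option Γ × ℕ) →₀ ℕ} {y : Option Γ × ℕ}
    (hg : ∀ x, g x ≠ 0 → x.2 ≤ k + 1) (hy : y.2 ≤ k + 1) :
    ∀ x : Option Γ × ℕ, (g + Finsupp.single y 1 : (Option Γ × ℕ) →₀ ℕ) x ≠ 0 → x.2 ≤ k + 1 := by
  classical
  intro x hx
  by_cases h : y = x
  · exact h ▸ hy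
  · apply hg
    simpa [Finsupp.single_apply, h] using hx

theorem sim_step {Q Γ : Type*} {M : DCPS Q Γ} (hd : IsDCFS M) {k : ℕ}
    {c : Config Q Γ} {a b : Config Q (Option Γ × ℕ)} {r : Rule Q (Option Γ × ℕ)}
    (hs : Sim k c a) (h : Step (recordDCFS M k) r a b) :
    ∃ d, (∃ r, StepIn M {i | i ≤ k} r c d) ∧ Sim k d b := by
  classical
  obtain ⟨qc, ac, ic⟩ := c
  obtain ⟨h1, h2, g, hg, hg1, hg2⟩ := hs
  cases h with
  | @cr q γ q' u α w i V hr =>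
    obtain ⟨j, hj, r, hrM, hrl⟩ := hr
    simp only [reduceCtorEq, false_and, false_or] at h1 h2 hg1 hg2
    obtain ⟨x, hx, hx1, hx2⟩ := h2
    cases r with
    | intr => simp [liftRule] at hrl
    | res => simp [liftRule] at hrl
    | cr p δ p' v β =>
      have hv : v.length ≤ 1 := hd _ hrM
      simp only [liftRule, Rule.cr.injEq] at hrl
      obtain ⟨rfl, rfl, rfl, rfl, rfl⟩ := hrl
      simp only [eR, Option.some.injEq, Prod.mk.injEq, List.cons.injEq] at hx1
      obtain ⟨⟨rfl, rfl⟩, rfl⟩ := hx1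
      simp only [eM, Option.toList] at hx2
      subst h1 hx2 hg1 hg2
      refine ⟨_, ⟨_, Step.cr hrM, Or.inl ⟨_, _, rfl, hj⟩⟩, rfl, Or.inr ⟨(v.head?, i), hj, ?_, ?_⟩, ?_⟩
      · simp [eR]
      · simp [eM, toList_head hv]
      · cases β with
        | none => exact ⟨g, hg, by simp [spawnOf], by simp [spawnOf]⟩
        | some β =>
          refine ⟨g + Finsupp.single (some β, i + 1) 1, bound_add hg (Nat.succ_le_succ hj), ?_, ?_⟩
          · simp [spawnOf, Finsupp.mapDomain_add, Finsupp.mapDomain_single, eR]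
          · simp [spawnOf, Finsupp.mapDomain_add, Finsupp.mapDomain_single, eM]
  | @intr q γ q' u w i V hr =>
    obtain ⟨j, hj, r, hrM, hrl⟩ := hr
    simp only [reduceCtorEq, false_and, false_or] at h1 h2 hg1 hg2
    obtain ⟨x, hx, hx1, hx2⟩ := h2
    cases r with
    | cr => simp [liftRule] at hrl
    | res => simp [liftRule] at hrl
    | intr p δ p' v =>
      have hv : v.length ≤ 1 := hd _ hrM
      simp only [liftRule, Rule.intr.injEq] at hrl
      obtain ⟨rfl, rfl, rfl, rfl⟩ := hrl
      simp only [eR, Option.some.injEq, Prod.mk.injEq, List.cons.injEq] at hx1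
      obtain ⟨⟨rfl, rfl⟩, rfl⟩ := hx1
      simp only [eM, Option.toList] at hx2
      subst h1 hx2 hg1 hg2
      refine ⟨_, ⟨_, Step.intr hrM, Or.inl ⟨_, _, rfl, hj⟩⟩, rfl, Or.inl ⟨rfl, rfl⟩, ?_⟩
      refine ⟨g + Finsupp.single (v.head?, i + 1) 1, bound_add hg (Nat.succ_le_succ hj), ?_, ?_⟩
      · simp [Finsupp.mapDomain_add, Finsupp.mapDomain_single, eR]
      · simp [Finsupp.mapDomain_add, Finsupp.mapDomain_single, eM, toList_head hv]
  | @res q γ q' w i V hr =>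
    obtain ⟨j, hj, r, hrM, hrl⟩ := hr
    simp only [reduceCtorEq, false_and, and_false, exists_false, or_false, true_and] at h1 h2 hg1 hg2
    cases r with
    | cr => simp [liftRule] at hrl
    | intr => simp [liftRule] at hrl
    | res p δ p' =>
      simp only [liftRule, Rule.res.injEq] at hrl
      obtain ⟨rfl, rfl, rfl⟩ := hrl
      have hmem : ((some δ, j) :: w, i) ∈ (g.mapDomain eR).support := by
        rw [← hg1]; simp
      obtain ⟨x, hxg, hx⟩ := Finset.mem_image.1 (Finsupp.mapDomain_support hmem)
      simp only [eR, Prod.mk.injEq, List.cons.injEq] at hx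
      obtain ⟨⟨rfl, rfl⟩, rfl⟩ := hx
      have hgx : g (some δ, j) ≠ 0 := by simpa using hxg
      obtain ⟨g', rfl⟩ : ∃ g', g = g' + Finsupp.single (some δ, j) 1 := by
        refine ⟨g - Finsupp.single (some δ, j) 1, (tsub_add_cancel_of_le ?_).symm⟩
        simpa [Finsupp.single_le_iff] using Nat.one_le_iff_ne_zero.2 hgx
      simp only [Finsupp.mapDomain_add, Finsupp.mapDomain_single] at hg1 hg2
      have hV : V = g'.mapDomain eR := add_right_cancel hg1
      subst h1 h2 hV hg2
      refine ⟨_, ⟨_, Step.res (w := []) hrM, Or.inr ⟨_, _, rfl, hj⟩⟩, rfl,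
        Or.inr ⟨(some δ, j), hj, rfl, rfl⟩, g', ?_, rfl, rfl⟩
      intro x hx
      apply hg
      simp [hx]

theorem sim_init {Q Γ : Type*} (M : DCPS Q Γ) (k : ℕ) :
    Sim k (initConfig M) (initConfig (recordDCFS M k)) := by
  classical
  refine ⟨rfl, Or.inl ⟨rfl, rfl⟩, Finsupp.single (some M.γ0, 0) 1, ?_, ?_, ?_⟩
  · intro x hx
    rw [Finsupp.single_apply] at hx
    split_ifs at hx with h
    · simp [← h]
    · exact absurd rfl hx
  · simp [initConfig, recordDCFS, Finsupp.mapDomain_single, eR]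
  · simp [initConfig, Finsupp.mapDomain_single, eM]

/-- Every run of the switch-number-recording DCFS `M'` can be
simulated by a `[0,k]`-bounded run of the DCFS `M` reaching the corresponding
configuration. -/
theorem bounded_simulates_record
    (Q Γ : Type) [Fintype Q] [Fintype Γ] (M : DCPS Q Γ)
    (hfin : M.rules.Finite) (hdcfs : IsDCFS M) (k : ℕ)
    (c' : Config Q (Option Γ × ℕ))
    (hreach : Reaches (recordDCFS M k) (initConfig (recordDCFS M k)) c') :
    ∃ c : Config Q Γ,
      ReachesIn M {i | i ≤ k} (initConfig M) c ∧
      c.state = c'.state ∧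
      (c'.active = none → c.active = none) ∧
      (∀ (w : Option Γ) (i : ℕ), i ≤ k → c'.active = some ([(w, i)], i) →
        c.active = some (w.toList, i)) ∧
      (∀ (w' : Option Γ) (j' : ℕ), j' ≤ k + 1 →
        c.idle (w'.toList, j') = c'.idle ([(w', j')], j')) ∧
      (∀ loc : List Γ × ℕ,
        (¬ ∃ (w' : Option Γ) (j' : ℕ), j' ≤ k + 1 ∧ loc = (w'.toList, j')) →
        c.idle loc = 0) := by
  classical
  obtain ⟨c, hc, hs⟩ : ∃ c, ReachesIn M {i | i ≤ k} (initConfig M) c ∧ Sim k c c' := by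
    unfold Reaches at hreach
    induction hreach with
    | refl => exact ⟨_, Relation.ReflTransGen.refl, sim_init M k⟩
    | tail _ hst ih =>
      obtain ⟨c, hc, hs⟩ := ih
      obtain ⟨r, hst⟩ := hst
      obtain ⟨d, hd, hs'⟩ := sim_step hdcfs hs hst
      exact ⟨d, Relation.ReflTransGen.tail hc hd, hs'⟩
  obtain ⟨h1, h2, g, hg, hg1, hg2⟩ := hs
  refine ⟨c, hc, h1, ?_, ?_, ?_, ?_⟩
  · intro h
    rcases h2 with h2 | ⟨x, _, hx, _⟩
    · exact h2.2
    · simp [hx] at h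
  · intro w i _ h
    rcases h2 with h2 | ⟨x, _, hx, hx'⟩
    · simp [h2.1] at h
    · rw [hx] at h
      have : x = (w, i) := eR_inj (Option.some.inj h)
      rw [hx', this]; rfl
  · intro w j _
    rw [hg1, hg2]
    exact (Finsupp.mapDomain_apply eM_inj g (w, j)).trans
      (Finsupp.mapDomain_apply eR_inj g (w, j)).symm
  · intro loc hl
    by_contra h0
    rw [hg2] at h0
    obtain ⟨x, hxg, hx⟩ := Finset.mem_image.1
      (Finsupp.mapDomain_support (Finsupp.mem_support_iff.2 h0))
    exact hl ⟨x.1, x.2, hg x (Finsupp.mem_support_iff.1 hxg), hx.symm⟩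

end DCPSFormal
end

section
/- Let M=(Q,Γ,Δ,q₀,γ₀) be a DCFS with Γ={γ₀,…,γ_n}, and let V be the VASS constructed from M. Then for every q∈Q: q is reachable by M if and only if the state (q,⊥) is reachable by V. -/
namespace DCPSFormal

/-- States of the VASS constructed from a DCFS: either the halting state `p_halt`,
or a pair of a global state of the DCFS and the stack content of the active thread
(`none` = no active thread, `some w` with `w ∈ Γ ∪ {ε}` modelled as `Option Γ`). -/
inductive VState (Q Γ : Type*) where
  | halt : VState Q Γ
  | st : Q → Option (Option Γ) → VState Q Γ

/-- The counter coordinate associated with a stack content `w ∈ Γ ∪ {ε}`: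
symbol `γ_j` gets coordinate `j` and `ε` gets the last coordinate. -/
def coordOf {n : ℕ} : Option (Fin (n + 1)) → Fin (n + 2)
  | some γ => γ.castSucc
  | none => Fin.last (n + 1)

/-- The VASS constructed from a DCFS `M` over states `Q` and stack alphabet
`Γ = {γ₀,…,γ_n}` (modelled as `Fin (n+1)`); its dimension is `n + 2`, its alphabet is
the set of rules, and all remaining cases of the displacement function go to `p_halt`. -/
def vassOf {n : ℕ} {Q : Type*} [DecidableEq Q] (M : DCPS Q (Fin (n + 1)))
    [DecidablePred (· ∈ M.rules)] :
    VASS (n + 2) (VState Q (Fin (n + 1))) (Rule Q (Fin (n + 1))) where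
  δ := fun s t =>
    match s, t with
    | .st q (some (some γ)), .cr q₁ γ₁ q' u α =>
        if Rule.cr q₁ γ₁ q' u α ∈ M.rules ∧ q₁ = q ∧ γ₁ = γ then
          (.st q' (some u.head?),
            match α with
            | none => 0
            | some a => unitVec (coordOf (some a)))
        else (.halt, 0)
    | .st q (some (some γ)), .intr q₁ γ₁ q' u =>
        if Rule.intr q₁ γ₁ q' u ∈ M.rules ∧ q₁ = q ∧ γ₁ = γ then
          (.st q' none, unitVec (coordOf u.head?))
        else (.halt, 0)
    | .st q none, .res q₁ γ q' =>
        if Rule.res q₁ γ q' ∈ M.rules ∧ q₁ = q then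
          (.st q' (some (some γ)), - unitVec (coordOf (some γ)))
        else (.halt, 0)
    | _, _ => (.halt, 0)
  s0 := .st M.q0 none
  v0 := fun i => if i = coordOf (some M.γ0) then 1 else 0

/-- The number of pending threads of a configuration with a given stack content
(summed over all switch numbers). -/
noncomputable def countStack {Q Γ : Type*} [DecidableEq Γ] (c : Config Q Γ)
    (w : List Γ) : ℕ :=
  c.idle.sum fun loc m => if loc.1 = w then m else 0

/-- The simulation map `μ` from configurations of the DCFS `M` to configurations
of the VASS constructed from `M`. -/
noncomputable def muV {Q : Type*} {n : ℕ} (c : Config Q (Fin (n + 1))) :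
    VState Q (Fin (n + 1)) × (Fin (n + 2) → ℕ) :=
  ((match c.active with
    | none => .st c.state none
    | some (w, _) => .st c.state (some w.head?)),
   fun i => if h : (i : ℕ) < n + 1 then countStack c [⟨(i : ℕ), h⟩] else countStack c [])

/-- number of idle threads with stack content `o` -/
noncomputable def cnt {Γ : Type*} [DecidableEq Γ] (V : (List Γ × ℕ) →₀ ℕ) (o : Option Γ) : ℕ :=
  V.sum fun loc m => if loc.1 = o.toList then m else 0

theorem cnt_add {Γ : Type*} [DecidableEq Γ] (V W : (List Γ × ℕ) →₀ ℕ) (o : Option Γ) :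
    cnt (V + W) o = cnt V o + cnt W o := by
  unfold cnt
  apply Finsupp.sum_add_index'
  · intro a; simp
  · intro a b c; split_ifs <;> simp

theorem cnt_single {Γ : Type*} [DecidableEq Γ] (p o : Option Γ) (i : ℕ) :
    cnt (Finsupp.single (p.toList, i) 1) o = if o = p then 1 else 0 := by
  unfold cnt
  rw [Finsupp.sum_single_index (by simp)]
  cases p <;> cases o <;> simp [eq_comm]

theorem cnt_pos {Γ : Type*} [DecidableEq Γ] (V : (List Γ × ℕ) →₀ ℕ) (o : Option Γ)
    (h : cnt V o ≠ 0) : ∃ i W, V = W + Finsupp.single (o.toList, i) 1 := by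
  unfold cnt Finsupp.sum at h
  obtain ⟨⟨w, i⟩, hm, hx⟩ := Finset.exists_ne_zero_of_sum_ne_zero h
  simp only [ne_eq, ite_eq_right_iff, not_forall] at hx
  obtain ⟨rfl, hx⟩ := hx
  refine ⟨i, V - Finsupp.single (o.toList, i) 1, ?_⟩
  rw [tsub_add_cancel_of_le]
  rw [Finsupp.single_le_iff]
  omega

theorem coordOf_inj {n : ℕ} (a b : Option (Fin (n + 1))) : coordOf a = coordOf b ↔ a = b := by
  cases a <;> cases b <;> simp [coordOf, Fin.ext_iff] <;> omega

theorem coordOf_surj {n : ℕ} (i : Fin (n + 2)) : ∃ o, coordOf o = i := by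
  induction i using Fin.lastCases with
  | last => exact ⟨none, rfl⟩
  | cast j => exact ⟨some j, rfl⟩

theorem exists_toList {Γ : Type*} (u : List Γ) (h : u.length ≤ 1) :
    ∃ o : Option Γ, u = o.toList := by
  match u, h with
  | [], _ => exact ⟨none, rfl⟩
  | [a], _ => exact ⟨some a, rfl⟩

@[simp] theorem head?_toList' {Γ : Type*} (o : Option Γ) : o.toList.head? = o := by
  cases o <;> rfl

/-- the simulation relation -/
structure Sim_s4 {n : ℕ} {Q : Type*} (c : Config Q (Fin (n + 1)))
    (v : VState Q (Fin (n + 1)) × (Fin (n + 2) → ℕ)) : Prop where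
  act : (c.active = none ∧ v.1 = .st c.state none) ∨
    ∃ o i, c.active = some (Option.toList o, i) ∧ v.1 = .st c.state (some o)
  cn : ∀ o, v.2 (coordOf o) = cnt c.idle o
  len : ∀ loc, c.idle loc ≠ 0 → loc.1.length ≤ 1

theorem len_add {Γ : Type*} (V W : (List Γ × ℕ) →₀ ℕ) :
    (∀ loc, (V + W) loc ≠ 0 → loc.1.length ≤ 1) ↔
    (∀ loc, V loc ≠ 0 → loc.1.length ≤ 1) ∧ (∀ loc, W loc ≠ 0 → loc.1.length ≤ 1) := by
  constructor
  · intro h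
    exact ⟨fun l hl => h l (by simp; omega), fun l hl => h l (by simp; omega)⟩
  · rintro ⟨h1, h2⟩ l hl
    by_cases h : V l = 0
    · exact h2 l (by simpa [h] using hl)
    · exact h1 l h

theorem len_single {Γ : Type*} (w : List Γ) (i : ℕ) :
    (∀ loc, (Finsupp.single (w, i) 1 : (List Γ × ℕ) →₀ ℕ) loc ≠ 0 → loc.1.length ≤ 1) ↔
    w.length ≤ 1 := by
  classical
  constructor
  · intro h; exact h (w, i) (by simp)
  · intro h l hl
    rw [Finsupp.single_apply] at hl
    have : (w, i) = l := by by_contra hh; simp [hh] at hl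
    subst this; exact h

theorem len_toList {Γ : Type*} (o : Option Γ) : o.toList.length ≤ 1 := by cases o <;> simp

theorem len_spawn {Γ : Type*} (α : Option Γ) (i : ℕ) :
    ∀ loc, (spawnOf α i) loc ≠ 0 → loc.1.length ≤ 1 := by
  cases α with
  | none => simp [spawnOf]
  | some a => exact (len_single _ _).2 (by simp)

theorem cnt_spawn {Γ : Type*} [DecidableEq Γ] (α o : Option Γ) (i : ℕ) :
    cnt (spawnOf α i) o = if α ≠ none ∧ o = α then 1 else 0 := by
  cases α with
  | none => simp [spawnOf, cnt]
  | some a => simpa [spawnOf] using cnt_single (some a) o (i + 1)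

theorem sim_init_s4 {n : ℕ} {Q : Type} [DecidableEq Q]
    (M : DCPS Q (Fin (n + 1))) [DecidablePred (· ∈ M.rules)] :
    Sim_s4 (initConfig M) ((vassOf M).s0, (vassOf M).v0) := by
  refine ⟨Or.inl ⟨rfl, rfl⟩, fun o => ?_, ?_⟩
  · have := cnt_single (some M.γ0) o 0
    simp only [Option.toList_some] at this
    simp [initConfig, vassOf, this, coordOf_inj]
  · exact (len_single _ _).2 (by simp)

theorem sim_fwd {n : ℕ} {Q : Type} [DecidableEq Q]
    (M : DCPS Q (Fin (n + 1))) [DecidablePred (· ∈ M.rules)] (hd : IsDCFS M)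
    {r c c' v} (hs : Step M r c c') (h : Sim_s4 c v) :
    ∃ v', VStep (vassOf M) r v v' ∧ Sim_s4 c' v' := by
  obtain ⟨s, x⟩ := v
  obtain ⟨ha, hc, hl⟩ := h
  cases hs with
  | @cr q γ q' u α w i V hr =>
    obtain ⟨p, rfl⟩ := exists_toList u (hd _ hr)
    simp only [reduceCtorEq, false_and, false_or, Option.some.injEq, Prod.mk.injEq] at ha
    obtain ⟨o, j, ⟨h1, rfl⟩, rfl⟩ := ha
    cases o with
    | none => simp at h1
    | some g =>
    simp only [Option.toList_some, List.cons.injEq] at h1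
    obtain ⟨rfl, rfl⟩ := h1
    refine ⟨(.st q' (some p), fun k => x k + if α ≠ none ∧ k = coordOf α then 1 else 0),
      ⟨?_, ?_⟩, ⟨Or.inr ⟨p, i, by simp, rfl⟩, ?_, (len_add _ _).2 ⟨hl, len_spawn _ _⟩⟩⟩
    · simp [vassOf, hr]
    · intro k
      cases α <;> simp [vassOf, hr, unitVec]
    · intro o
      have := hc o
      simp only at this
      simp [cnt_add, cnt_spawn, coordOf_inj, this]
  | @intr q γ q' u w i V hr =>
    obtain ⟨p, rfl⟩ := exists_toList u (hd _ hr)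
    simp only [reduceCtorEq, false_and, false_or, Option.some.injEq, Prod.mk.injEq] at ha
    obtain ⟨o, j, ⟨h1, rfl⟩, rfl⟩ := ha
    cases o with
    | none => simp at h1
    | some g =>
    simp only [Option.toList_some, List.cons.injEq] at h1
    obtain ⟨rfl, rfl⟩ := h1
    refine ⟨(.st q' none, fun k => x k + if k = coordOf p then 1 else 0),
      ⟨?_, ?_⟩, ⟨Or.inl ⟨rfl, rfl⟩, ?_, (len_add _ _).2 ⟨hl, (len_single _ _).2 ?_⟩⟩⟩
    · simp [vassOf, hr]
    · intro k
      simp [vassOf, hr, unitVec]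
    · intro o
      have := hc o
      simp only at this
      simp [cnt_add, cnt_single, coordOf_inj, this]
    · simpa using len_toList p
  | @res q γ q' w i V hr =>
    simp only [true_and, reduceCtorEq, false_and, exists_false, or_false] at ha
    subst ha
    have hl' := (len_add _ _).1 hl
    have hw := (len_single _ _).1 hl'.2
    simp only [List.length_cons, add_le_iff_nonpos_left, nonpos_iff_eq_zero,
      List.length_eq_zero_iff] at hw
    subst hw
    refine ⟨(.st q' (some (some γ)), fun k => x k - if k = coordOf (some γ) then 1 else 0),
      ⟨?_, ?_⟩, ⟨Or.inr ⟨some γ, i, rfl, rfl⟩, ?_, hl'.1⟩⟩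
    · simp [vassOf, hr]
    · intro k
      have := hc (some γ)
      have h2 := cnt_single (some γ) (some γ) i
      simp only [cnt_add, Option.toList_some] at this h2
      by_cases hk : k = coordOf (some γ)
      · subst hk
        simp [vassOf, hr, unitVec]
        simp at h2
        omega
      · simp [vassOf, hr, unitVec, hk]
    · intro o
      have := hc o
      have h2 := cnt_single (some γ) o i
      simp only [cnt_add, Option.toList_some] at this h2
      simp only [this, h2, coordOf_inj]
      omega

theorem sim_bwd {n : ℕ} {Q : Type} [DecidableEq Q]
    (M : DCPS Q (Fin (n + 1))) [DecidablePred (· ∈ M.rules)] (hd : IsDCFS M)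
    {r c v v'} (hs : VStep (vassOf M) r v v') (h : Sim_s4 c v) :
    v'.1 = .halt ∨ ∃ c', Step M r c c' ∧ Sim_s4 c' v' := by
  obtain ⟨s, x⟩ := v
  obtain ⟨s', x'⟩ := v'
  obtain ⟨q, a, V⟩ := c
  obtain ⟨ha, hc, hl⟩ := h
  obtain ⟨h1, h2⟩ := hs
  simp only at h1 h2 ha hc hl ⊢
  rcases ha with ⟨rfl, rfl⟩ | ⟨o, i, rfl, rfl⟩
  · cases r with
    | cr => left; rw [← h1]; rfl
    | intr => left; rw [← h1]; rfl
    | res q₁ γ q' =>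
      by_cases hr : Rule.res q₁ γ q' ∈ M.rules ∧ q₁ = q
      · obtain ⟨hr, rfl⟩ := hr
        right
        simp only [vassOf, hr, true_and, if_true] at h1 h2
        subst h1
        have h3 := h2 (coordOf (some γ))
        simp only [unitVec, Pi.neg_apply, if_true] at h3
        obtain ⟨i, W, rfl⟩ := cnt_pos V (some γ) (by rw [← hc]; omega)
        refine ⟨_, Step.res (w := []) hr, ⟨Or.inr ⟨some γ, i, rfl, rfl⟩, ?_, ((len_add _ _).1 hl).1⟩⟩
        intro o
        have h4 := h2 (coordOf o)
        have h5 := hc o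
        simp only [cnt_add, cnt_single] at h5
        simp only [unitVec, Pi.neg_apply, coordOf_inj] at h4
        simp only
        split_ifs at h4 h5 <;> omega
      · left; rw [← h1]; simp [vassOf, hr]
  · cases o with
    | none => left; rw [← h1]; cases r <;> rfl
    | some γ =>
    cases r with
    | res => left; rw [← h1]; rfl
    | cr q₁ γ₁ q' u α =>
      by_cases hr : Rule.cr q₁ γ₁ q' u α ∈ M.rules ∧ q₁ = q ∧ γ₁ = γ
      · obtain ⟨hr, rfl, rfl⟩ := hr
        right
        obtain ⟨p, rfl⟩ := exists_toList u (hd _ hr)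
        simp only [vassOf, hr, true_and, if_true, and_self, head?_toList'] at h1 h2
        subst h1
        refine ⟨_, Step.cr (w := []) hr, ⟨Or.inr ⟨p, i, by simp, rfl⟩, ?_,
          (len_add _ _).2 ⟨hl, len_spawn _ _⟩⟩⟩
        intro o
        have h4 := h2 (coordOf o)
        have h5 := hc o
        simp only [cnt_add, cnt_spawn]
        cases α with
        | none => simp at h4 ⊢; omega
        | some a =>
          simp only [unitVec, coordOf_inj] at h4
          simp only [ne_eq, reduceCtorEq, not_false_eq_true, true_and]
          split_ifs at h4 ⊢ <;> omega
      · left; rw [← h1]; simp only [vassOf, hr, if_false]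
    | intr q₁ γ₁ q' u =>
      by_cases hr : Rule.intr q₁ γ₁ q' u ∈ M.rules ∧ q₁ = q ∧ γ₁ = γ
      · obtain ⟨hr, rfl, rfl⟩ := hr
        right
        obtain ⟨p, rfl⟩ := exists_toList u (hd _ hr)
        simp only [vassOf, hr, true_and, if_true, and_self, head?_toList'] at h1 h2
        subst h1
        refine ⟨_, Step.intr (w := []) hr, ⟨Or.inl ⟨rfl, rfl⟩, ?_,
          (len_add _ _).2 ⟨hl, (len_single _ _).2 (by simpa using len_toList p)⟩⟩⟩
        intro o
        have h4 := h2 (coordOf o)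
        have h5 := hc o
        simp only [cnt_add, cnt_single, List.append_nil]
        simp only [unitVec, coordOf_inj] at h4
        split_ifs at h4 ⊢ <;> omega
      · left; rw [← h1]; simp only [vassOf, hr, if_false]

/-- For a DCFS `M` with stack alphabet `Γ = {γ₀,…,γ_n}` and the VASS
`V` constructed from it, a state `q` is reachable by `M` iff `(q,⊥)` is reachable by `V`. -/
theorem sr_iff_vass_reachable
    (n : ℕ) (Q : Type) [Fintype Q] [DecidableEq Q]
    (M : DCPS Q (Fin (n + 1))) [DecidablePred (· ∈ M.rules)]
    (hfin : M.rules.Finite) (hdcfs : IsDCFS M) (q : Q) :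
    StateReachable M q ↔ VStateReachable (vassOf M) (.st q none) := by
  constructor
  · rintro ⟨c, hc, ha, rfl⟩
    have key : ∃ v, VReaches (vassOf M) ((vassOf M).s0, (vassOf M).v0) v ∧ Sim_s4 c v := by
      clear ha
      induction hc with
      | refl => exact ⟨_, Relation.ReflTransGen.refl, sim_init_s4 M⟩
      | tail _ hs ih =>
        obtain ⟨v, hv, hsim⟩ := ih
        obtain ⟨r, hs⟩ := hs
        obtain ⟨v', h1, h2⟩ := sim_fwd M hdcfs hs hsim
        exact ⟨v', hv.tail ⟨r, h1⟩, h2⟩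
    obtain ⟨⟨s, x⟩, hv, hsim⟩ := key
    rcases hsim.act with ⟨_, h⟩ | ⟨o, i, h, _⟩
    · simp only at h
      subst h
      exact ⟨x, hv⟩
    · rw [ha] at h; cases h
  · rintro ⟨x, hx⟩
    have key : ∀ v, VReaches (vassOf M) ((vassOf M).s0, (vassOf M).v0) v →
        v.1 = .halt ∨ ∃ c, Reaches M (initConfig M) c ∧ Sim_s4 c v := by
      intro v hv
      induction hv with
      | refl => exact Or.inr ⟨_, Relation.ReflTransGen.refl, sim_init_s4 M⟩
      | tail _ hs ih =>
        obtain ⟨r, hs⟩ := hs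
        rcases ih with h | ⟨c, hc, hsim⟩
        · left
          rw [← hs.1, h]
          cases r <;> rfl
        · rcases sim_bwd M hdcfs hs hsim with h | ⟨c', h1, h2⟩
          · exact Or.inl h
          · exact Or.inr ⟨c', Relation.ReflTransGen.tail hc ⟨r, h1⟩, h2⟩
    rcases key _ hx with h | ⟨c, hc, hsim⟩
    · cases h
    · rcases hsim.act with ⟨h1, h⟩ | ⟨o, i, _, h⟩
      · simp only [VState.st.injEq, and_true] at h
        exact ⟨c, hc, h1, h.symm⟩
      · simp at h

end DCPSFormal
end

section
/- Let M=(Q,Γ,Δ,q₀,γ₀) be a DCFS with Γ={γ₀,…,γ_n}, V the VASS constructed from M, and μ the simulation map from configurations of M to configurations of V. If c_init^M→*c in T(M) via a run labelled by the word τ over Δ, then ((q₀,⊥),u₀)→*μ(c) in T(V) via a run labelled by the same word τ. -/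
namespace DCPSFormal

theorem countStack_add_single {Q Γ : Type*} [DecidableEq Γ] (q q' : Q)
    (a a' : Option (List Γ × ℕ)) (V : (List Γ × ℕ) →₀ ℕ) (w w' : List Γ) (i : ℕ) :
    countStack (⟨q, a, V + Finsupp.single (w, i) 1⟩ : Config Q Γ) w' =
      countStack (⟨q', a', V⟩ : Config Q Γ) w' + if w = w' then 1 else 0 := by
  unfold countStack
  rw [Finsupp.sum_add_index']
  · simp [Finsupp.sum_single_index]
  · intro x; simp
  · intro x b c; split_ifs <;> simp

theorem muV_add_single {Q : Type*} {n : ℕ} (q q' : Q)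
    (a a' : Option (List (Fin (n + 1)) × ℕ)) (V : (List (Fin (n + 1)) × ℕ) →₀ ℕ)
    (w : List (Fin (n + 1))) (hw : w.length ≤ 1) (i : ℕ) (j : Fin (n + 2)) :
    (muV (⟨q, a, V + Finsupp.single (w, i) 1⟩ : Config Q (Fin (n + 1)))).2 j =
      (muV (⟨q', a', V⟩ : Config Q (Fin (n + 1)))).2 j +
        if j = coordOf w.head? then 1 else 0 := by
  simp only [muV]
  match w, hw with
  | [], _ =>
    split_ifs with h1 h2 h2
    · simp [coordOf, Fin.ext_iff] at h2; omega
    · rw [countStack_add_single q q' a a']; simp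
    · rw [countStack_add_single q q' a a']; simp
    · exact absurd (Fin.ext (by simp [coordOf]; omega)) h2
  | [x], _ =>
    split_ifs with h1 h2 h2
    · rw [countStack_add_single q q' a a']
      simp [coordOf, Fin.ext_iff] at h2
      simp [Fin.ext_iff, h2]
    · rw [countStack_add_single q q' a a']
      simp [coordOf, Fin.ext_iff] at h2
      simp [Fin.ext_iff]; omega
    · simp [coordOf, Fin.ext_iff] at h2; omega
    · rw [countStack_add_single q q' a a']; simp

theorem muV_add_one {Q : Type*} {n : ℕ} (q q' : Q)
    (a a' : Option (List (Fin (n + 1)) × ℕ)) (V : (List (Fin (n + 1)) × ℕ) →₀ ℕ)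
    (x : Fin (n + 1)) (i : ℕ) (j : Fin (n + 2)) :
    (muV (⟨q, a, V + Finsupp.single ([x], i) 1⟩ : Config Q (Fin (n + 1)))).2 j =
      (muV (⟨q', a', V⟩ : Config Q (Fin (n + 1)))).2 j +
        if j = coordOf (some x) then 1 else 0 :=
  muV_add_single q q' a a' V [x] (by simp) i j

theorem muV_snd_congr {Q : Type*} {n : ℕ} (q q' : Q)
    (a a' : Option (List (Fin (n + 1)) × ℕ)) (V : (List (Fin (n + 1)) × ℕ) →₀ ℕ) :
    (muV (⟨q, a, V⟩ : Config Q (Fin (n + 1)))).2 =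
      (muV (⟨q', a', V⟩ : Config Q (Fin (n + 1)))).2 := rfl

/-- All stacks have length at most one. -/
def ShortStacks {Q Γ : Type*} (c : Config Q Γ) : Prop :=
  (∀ w i, c.active = some (w, i) → w.length ≤ 1) ∧ ∀ w i, c.idle (w, i) ≠ 0 → w.length ≤ 1

theorem short_add_single {Γ : Type*} {V : (List Γ × ℕ) →₀ ℕ} {u : List Γ} {k : ℕ}
    (hV : ∀ w i, V (w, i) ≠ 0 → w.length ≤ 1) (hu : u.length ≤ 1) :
    ∀ (w : List Γ) (i : ℕ), (V + Finsupp.single (u, k) 1 : (List Γ × ℕ) →₀ ℕ) (w, i) ≠ 0 → w.length ≤ 1 := by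
  classical
  intro w i h
  by_cases h0 : V (w, i) = 0
  · simp only [Finsupp.add_apply, h0, Finsupp.single_apply, zero_add, ne_eq, ite_eq_right_iff,
      Prod.mk.injEq] at h
    by_cases he : u = w
    · exact he ▸ hu
    · simp [he] at h
  · exact hV w i h0

theorem step_sim {n : ℕ} {Q : Type} [DecidableEq Q]
    (M : DCPS Q (Fin (n + 1))) [DecidablePred (· ∈ M.rules)] (hd : IsDCFS M)
    {r : Rule Q (Fin (n + 1))} {c c' : Config Q (Fin (n + 1))} (hs : Step M r c c')
    (hc : ShortStacks c) : ShortStacks c' ∧ VStep (vassOf M) r (muV c) (muV c') := by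
  cases hs with
  | @cr q γ q' u α w i V hr =>
    have hu : u.length ≤ 1 := hd _ hr
    have hw := hc.1 _ _ rfl
    obtain rfl : w = [] := by
      cases w with
      | nil => rfl
      | cons => simp at hw
    refine ⟨⟨?_, ?_⟩, ?_, ?_⟩
    · rintro w' i' h
      simp at h
      rw [← h.1]; exact hu
    · cases α with
      | none => simpa [spawnOf] using hc.2
      | some a => exact short_add_single hc.2 (by simp)
    · simp [muV, vassOf, hr]
    · intro j
      cases α with
      | none =>
        rw [muV_snd_congr q' q _ (some ([γ], i))]
        simp [spawnOf, vassOf, muV, hr]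
      | some a =>
        simp only [spawnOf]
        rw [muV_add_one q' q _ (some ([γ], i)) V a]
        simp [vassOf, muV, hr, unitVec]
  | @intr q γ q' u w i V hr =>
    have hu : u.length ≤ 1 := hd _ hr
    have hw := hc.1 _ _ rfl
    obtain rfl : w = [] := by
      cases w with
      | nil => rfl
      | cons => simp at hw
    rw [List.append_nil]
    refine ⟨⟨?_, ?_⟩, ?_, ?_⟩
    · rintro w' i' h
      simp at h
    · exact short_add_single hc.2 hu
    · simp [muV, vassOf, hr]
    · intro j
      rw [muV_add_single q' q _ (some ([γ], i)) V u hu]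
      simp [vassOf, muV, hr, unitVec]
  | @res q γ q' w i V hr =>
    have hw := hc.2 (γ :: w) i (by simp)
    obtain rfl : w = [] := by
      cases w with
      | nil => rfl
      | cons => simp at hw
    refine ⟨⟨?_, ?_⟩, ?_, ?_⟩
    · rintro w' i' h
      simp at h
      rw [← h.1]; simp
    · intro w' i' h
      refine hc.2 w' i' ?_
      intro h'
      simp only [Finsupp.add_apply] at h'
      exact h (Nat.eq_zero_of_add_eq_zero_right h')
    · simp [muV, vassOf, hr]
    · intro j
      rw [muV_add_one q q' _ (some ([γ], i)) V γ]
      simp [vassOf, muV, hr, unitVec]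

theorem run_sim {n : ℕ} {Q : Type} [DecidableEq Q]
    (M : DCPS Q (Fin (n + 1))) [DecidablePred (· ∈ M.rules)] (hd : IsDCFS M)
    {τ : List (Rule Q (Fin (n + 1)))} {c c' : Config Q (Fin (n + 1))}
    (hs : LRun (Step M) τ c c') (hc : ShortStacks c) :
    LRun (VStep (vassOf M)) τ (muV c) (muV c') := by
  induction hs with
  | nil c => exact .nil _
  | cons h _ ih =>
    obtain ⟨h1, h2⟩ := step_sim M hd h hc
    exact .cons h2 (ih h1)

/-- Every run of the DCFS `M` labelled by a word `τ` of rules is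
simulated by a run of the constructed VASS labelled by the same word, ending in `μ(c)`. -/
theorem vass_simulates_dcfs
    (n : ℕ) (Q : Type) [Fintype Q] [DecidableEq Q]
    (M : DCPS Q (Fin (n + 1))) [DecidablePred (· ∈ M.rules)]
    (hfin : M.rules.Finite) (hdcfs : IsDCFS M)
    (τ : List (Rule Q (Fin (n + 1)))) (c : Config Q (Fin (n + 1)))
    (hrun : LRun (Step M) τ (initConfig M) c) :
    LRun (VStep (vassOf M)) τ ((vassOf M).s0, (vassOf M).v0) (muV c) := by
  have hshort : ShortStacks (initConfig M) := by
    refine ⟨by simp [initConfig], ?_⟩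
    have := short_add_single (V := 0) (u := [M.γ0]) (k := 0) (by simp) (by simp)
    simpa [initConfig] using this
  have hinit : muV (initConfig M) = ((vassOf M).s0, (vassOf M).v0) := by
    refine Prod.ext rfl (funext fun j => ?_)
    have := muV_add_one M.q0 M.q0 none none 0 M.γ0 0 j
    rw [zero_add] at this
    refine this.trans ?_
    simp [muV, countStack, vassOf]
  rw [← hinit]
  exact run_sim M hdcfs hrun hshort

end DCPSFormal
end

section
/- For every n∈ℕ, consider the PDA P=({p₀,p₁,p₂},{a},{⊥,γ₀,…,γ_n},Δ,p₀,⊥,{p₂}) whose transition relation Δ consists exactly of: ⟨p₀,⊥⟩→^{ε}⟨p₁,γ₀⊥⟩; for every i∈{0,…,n−1}, ⟨p₁,γ_i⟩→^{ε}⟨p₁,γ_{i+1}γ_{i+1}⟩; ⟨p₁,γ_n⟩→^{a}⟨p₁,ε⟩; and ⟨p₁,⊥⟩→^{ε}⟨p₂,ε⟩. Then L(P)={a^{2^n}}, the language containing only the word consisting of 2^n copies of the letter a. -/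
namespace DCPSFormal

/-- The doubling PDA witnessing the exponential succinctness of PDAs: states
`p₀ = 0, p₁ = 1, p₂ = 2`, one-letter input alphabet `Unit`, stack alphabet
`{⊥, γ₀, …, γ_n}` modelled as `Option (Fin (n+1))` with `⊥ = none`. -/
def doublingPDA (n : ℕ) : PDA (Fin 3) Unit (Option (Fin (n + 1))) where
  trans :=
    { t | t = (((0 : Fin 3), (none : Option (Fin (n + 1)))), (none : Option Unit),
               ((1 : Fin 3), [some 0, none])) ∨
          (∃ i : Fin n, t = (((1 : Fin 3), some i.castSucc), (none : Option Unit),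
               ((1 : Fin 3), [some i.succ, some i.succ]))) ∨
          t = (((1 : Fin 3), some (Fin.last n)), some (), ((1 : Fin 3), [])) ∨
          t = (((1 : Fin 3), (none : Option (Fin (n + 1)))), (none : Option Unit),
               ((2 : Fin 3), [])) }
  p0 := 0
  γ0 := none
  final := {2}

/-- Number of letters still to be read before the first bottom symbol. -/
def dval (n : ℕ) : List (Option (Fin (n + 1))) → ℕ
  | [] => 0
  | none :: _ => 0
  | some i :: w => 2 ^ (n - i.val) + dval n w

/-- Number of letters still to be read from a configuration. -/
def dpot (n : ℕ) (c : Fin 3 × List (Option (Fin (n + 1)))) : ℕ :=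
  if c.1 = 0 then 2 ^ n else if c.1 = 1 then dval n c.2 else 0

theorem dpot_step (n : ℕ) {a c c'} (h : PDAStep (doublingPDA n) a c c') :
    dpot n c = dpot n c' + a.elim 0 (fun _ => 1) := by
  cases h with
  | mk h =>
    rcases h with h | ⟨i, h⟩ | h | h
    · simp only [Prod.mk.injEq] at h
      obtain ⟨⟨rfl, rfl⟩, rfl, rfl, rfl⟩ := h
      simp [dpot, dval]
    · simp only [Prod.mk.injEq] at h
      obtain ⟨⟨rfl, rfl⟩, rfl, rfl, rfl⟩ := h
      have h1 : n - i.val = (n - (i.val + 1)) + 1 := by have := i.isLt; omega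
      simp only [dpot, dval, List.cons_append, List.nil_append, Fin.val_castSucc, Fin.val_succ,
        Option.elim]
      rw [h1, pow_succ]
      simp
      ring
    · simp only [Prod.mk.injEq] at h
      obtain ⟨⟨rfl, rfl⟩, rfl, rfl, rfl⟩ := h
      simp [dpot, dval, add_comm]
    · simp only [Prod.mk.injEq] at h
      obtain ⟨⟨rfl, rfl⟩, rfl, rfl, rfl⟩ := h
      simp [dpot, dval]

theorem dpot_trace (n : ℕ) {v c c'} (h : PDATrace (doublingPDA n) v c c') :
    dpot n c = dpot n c' + v.length := by
  induction h with
  | nil => simp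
  | eps h _ ih => have := dpot_step n h; simp at this; omega
  | cons h _ ih => have := dpot_step n h; simp at this ⊢; omega

theorem dtrace_pop (n k : ℕ) : ∀ (i : Fin (n + 1)), i.val + k = n → ∀ w v c,
    PDATrace (doublingPDA n) v (1, w) c →
    PDATrace (doublingPDA n) (List.replicate (2 ^ k) () ++ v) (1, some i :: w) c := by
  induction k with
  | zero =>
    intro i hi w v c h
    have : i = Fin.last n := Fin.ext (by simpa using hi)
    subst this
    exact PDATrace.cons (PDAStep.mk (u := []) (Or.inr (Or.inr (Or.inl rfl)))) h
  | succ k ih =>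
    intro i hi w v c h
    obtain ⟨j, rfl⟩ : ∃ j : Fin n, i = j.castSucc := ⟨⟨i.val, by omega⟩, rfl⟩
    have hj : j.succ.val + k = n := by simp at hi ⊢; omega
    refine PDATrace.eps (PDAStep.mk (Or.inr (Or.inl ⟨j, rfl⟩))) ?_
    have := ih _ hj _ _ _ (ih _ hj _ _ _ h)
    rw [← List.append_assoc, ← List.replicate_add, ← two_mul, ← pow_succ'] at this
    exact this

/-- The language of the doubling PDA is the singleton `{a^{2^n}}`. -/
theorem doublingPDA_lang (n : ℕ) :
    PDALang (doublingPDA n) = {List.replicate (2 ^ n) ()} := by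
  ext v
  constructor
  · rintro ⟨p, w, hp, h⟩
    have hp : p = 2 := hp
    subst hp
    have := dpot_trace n h
    simp [dpot, doublingPDA] at this
    exact List.eq_replicate_iff.2 ⟨this.symm, fun _ _ => rfl⟩
  · intro h
    have h : v = _ := h
    subst h
    refine ⟨2, [], rfl, PDATrace.eps (PDAStep.mk (Or.inl rfl)) ?_⟩
    have := dtrace_pop n n 0 (by simp) [none] [] (2, [])
      (PDATrace.eps (PDAStep.mk (u := []) (Or.inr (Or.inr (Or.inr rfl)))) (PDATrace.nil _))
    rw [List.append_nil] at this
    exact this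

end DCPSFormal
end

section
/- For every n∈ℕ, every finite state automaton A over the one-letter alphabet {a} with L(A)={a^m : 0 ≤ m ≤ 2^n} has at least 2^n states. (The language {a^m : 0 ≤ m ≤ 2^n} is the downward closure of the singleton language {a^{2^n}} with respect to the subword relation.) -/
namespace DCPSFormal

theorem FSARun.app {S A : Type*} {Au : FSA S A} {u v : List A} {s q t : S}
    (h : FSARun Au u s q) (h' : FSARun Au v q t) : FSARun Au (u ++ v) s t := by
  induction h with
  | nil => exact h'
  | eps e _ ih => exact .eps e (ih h')
  | cons e _ ih => exact .cons e (ih h')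

theorem FSARun.split {S A : Type*} {Au : FSA S A} {w : List A} {s t : S}
    (h : FSARun Au w s t) : ∀ u v, w = u ++ v → ∃ q, FSARun Au u s q ∧ FSARun Au v q t := by
  induction h with
  | nil s =>
    intro u v h
    obtain ⟨rfl, rfl⟩ := List.append_eq_nil_iff.1 h.symm
    exact ⟨s, .nil _, .nil _⟩
  | eps e _ ih =>
    intro u v h
    obtain ⟨q, h1, h2⟩ := ih u v h
    exact ⟨q, .eps e h1, h2⟩
  | @cons a w s s' s'' e r ih =>
    intro u v h
    cases u with
    | nil =>
      simp only [List.nil_append] at h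
      subst h
      exact ⟨s, .nil _, .cons e r⟩
    | cons b u =>
      simp only [List.cons_append, List.cons.injEq] at h
      obtain ⟨rfl, h⟩ := h
      obtain ⟨q, h1, h2⟩ := ih u v h
      exact ⟨q, .cons e h1, h2⟩

/-- Every finite state automaton over the one-letter alphabet `{a}`
(modelled as `Unit`) recognizing `{a^m : 0 ≤ m ≤ 2^n}` — the downward closure of
`{a^{2^n}}` with respect to the subword relation — has at least `2^n` states. -/
theorem downward_closure_blowup (n : ℕ) (S : Type) [Fintype S] (Au : FSA S Unit)
    (hlang : FSALang Au = { v | ∃ m ≤ 2 ^ n, v = List.replicate m () }) :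
    2 ^ n ≤ Fintype.card S := by
  have hmem : List.replicate (2 ^ n) () ∈ FSALang Au := by
    rw [hlang]; exact ⟨_, le_rfl, rfl⟩
  obtain ⟨s, hs, f, hf, hr⟩ := hmem
  have hq : ∀ i : Fin (2 ^ n), ∃ q, FSARun Au (List.replicate i.1 ()) s q ∧
      FSARun Au (List.replicate (2 ^ n - i.1) ()) q f := by
    intro i
    apply hr.split
    rw [List.replicate_append_replicate]
    congr 1
    have := i.2
    omega
  choose q h1 h2 using hq
  have key : ∀ i j : Fin (2 ^ n), q i = q j → j.1 ≤ i.1 := by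
    intro i j hij
    have hrun := (h1 j).app (hij ▸ h2 i)
    have hm : List.replicate j.1 () ++ List.replicate (2 ^ n - i.1) () ∈ FSALang Au :=
      ⟨s, hs, f, hf, hrun⟩
    rw [hlang] at hm
    obtain ⟨m, hm, he⟩ := hm
    have hl := congrArg List.length he
    simp only [List.length_append, List.length_replicate] at hl
    have := i.2
    omega
  have hinj : Function.Injective q := fun i j hij =>
    Fin.ext (le_antisymm (key j i hij.symm) (key i j hij))
  simpa using Fintype.card_le_of_injective q hinj

end DCPSFormal
end
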